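/- Let (X^H)_{H∈(0,1)} be a family of centered Gaussian processes on [0,1] such that, for a constant C₂ > 0 and all H ∈ (0,1), ‖X^H_t − X^H_s‖₂ ≤ C₂|t−s|^H for all t, s ∈ [0,1]. Let H_m ∈ (0,1) and integers n_m ≥ 2 be sequences with H_m → 0 and H_m·ln n_m → 0 as m → ∞. Then √(H_m)·E[max_{0≤i≤n_m} X^{H_m}_{i/n_m}] → 0 as m → ∞, i.e. E[max_{0≤i≤n_m} X^{H_m}_{i/n_m}] = o(H_m^{−1/2}). -/

import Mathlib

/-!
Let `C` bound the `L²`-norms of the increments from time `0`; under the Hölder hypothesis `C = C₂`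
works. Since `E X_0 = 0`, the expected maximum over the grid is that of the `n + 1` increments, each
centered Gaussian with variance at most `C ^ 2`. Jensen's inequality for `x ↦ exp (r x)` together
with `exp (r max) ≤ ∑ exp (r ·)` gives `r E[max] ≤ log (n + 1) + C ^ 2 r ^ 2 / 2` for every real
`r`, of either sign; the discriminant of this quadratic in `r` yields
`E[max] ≤ C √(2 log (n + 1))`. After multiplication by `√H_m` this bound tends to `0`, because
`H_m log (n_m + 1) ≤ H_m log 2 + H_m log n_m`.
-/

open MeasureTheory ProbabilityTheory Real Set Filter Topology

noncomputable section

/-- `X` is a centered Gaussian process on the time set `S`: every finite linear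
combination `∑ i, c i * X (ts i)` of its values at times in `S` is a centered
Gaussian random variable. -/
def IsCenteredGaussianOn {Ω : Type} [MeasurableSpace Ω] (μ : Measure Ω)
    (X : ℝ → Ω → ℝ) (S : Set ℝ) : Prop :=
  (∀ t ∈ S, Measurable (X t)) ∧
  ∀ (k : ℕ) (c : Fin k → ℝ) (ts : Fin k → ℝ), (∀ i, ts i ∈ S) →
    ∃ v : NNReal, μ.map (fun ω => ∑ i, c i * X (ts i) ω) = gaussianReal 0 v

/-- The `L²`-norm `‖Y‖₂ = (E Y²)^{1/2}` of a real random variable. -/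
def l2norm {Ω : Type} [MeasurableSpace Ω] (μ : Measure Ω) (Y : Ω → ℝ) : ℝ :=
  Real.sqrt (∫ ω, (Y ω) ^ 2 ∂μ)

/-- The expected supremum `E [sup_{0 ≤ t ≤ 1} X_t]`. -/
def expMax {Ω : Type} [MeasurableSpace Ω] (μ : Measure Ω) (X : ℝ → Ω → ℝ) : ℝ :=
  ∫ ω, (⨆ t : Icc (0:ℝ) 1, X t.1 ω) ∂μ

/-- The expected maximum over the grid: `E [max_{0 ≤ i ≤ n} X_{i/n}]`. -/
def expMaxGrid {Ω : Type} [MeasurableSpace Ω] (μ : Measure Ω) (X : ℝ → Ω → ℝ) (n : ℕ) : ℝ :=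
  ∫ ω, (⨆ i : Fin (n + 1), X (((i : ℕ) : ℝ) / (n : ℝ)) ω) ∂μ

/-- `B` is a fractional Brownian motion with Hurst parameter `H`: a centered Gaussian
process on `[0,∞)` with a.s. continuous sample paths, `B 0 = 0`, and covariance
`E[B_s B_t] = (s^{2H} + t^{2H} - |t-s|^{2H}) / 2`. -/
def IsFBM {Ω : Type} [MeasurableSpace Ω] (μ : Measure Ω) (H : ℝ) (B : ℝ → Ω → ℝ) : Prop :=
  IsCenteredGaussianOn μ B (Ici 0) ∧
  (∀ᵐ ω ∂μ, ContinuousOn (fun t => B t ω) (Ici 0)) ∧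
  (∀ᵐ ω ∂μ, B 0 ω = 0) ∧
  ∀ s t : ℝ, 0 ≤ s → 0 ≤ t →
    ∫ ω, B s ω * B t ω ∂μ = (s ^ (2 * H) + t ^ (2 * H) - |t - s| ^ (2 * H)) / 2

section FiniteMaximum

variable {Ω ι : Type*} [MeasurableSpace Ω] {μ : Measure Ω} {Z : ι → Ω → ℝ}

lemma apply_iSup_le_sum [Fintype ι] [Nonempty ι] {f : ℝ → ℝ} (hf : ∀ x, 0 ≤ f x) (a : ι → ℝ) :
    f (⨆ i, a i) ≤ ∑ i, f (a i) := by
  obtain ⟨i, hi⟩ := exists_eq_ciSup_of_finite (f := a)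
  rw [← hi]
  exact Finset.single_le_sum (fun j _ => hf (a j)) (Finset.mem_univ i)

lemma integrable_comp_iSup [Finite ι] [Nonempty ι] {f : ℝ → ℝ} (hf : Measurable f)
    (hZ : ∀ i, AEMeasurable (Z i) μ) (hfZ : ∀ i, Integrable (fun ω => f (Z i ω)) μ) :
    Integrable (fun ω => f (⨆ i, Z i ω)) μ := by
  cases nonempty_fintype ι
  exact (integrable_finsetSum Finset.univ fun i _ => (hfZ i).norm).mono'
    (hf.comp_aemeasurable (AEMeasurable.iSup hZ)).aestronglyMeasurable
    (ae_of_all μ fun ω => apply_iSup_le_sum (fun x => norm_nonneg (f x)) fun i => Z i ω)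

lemma integrable_iSup [Finite ι] [Nonempty ι] (hZ : ∀ i, Integrable (Z i) μ) :
    Integrable (fun ω => ⨆ i, Z i ω) μ :=
  integrable_comp_iSup measurable_id (fun i => (hZ i).aemeasurable) hZ

end FiniteMaximum

section SubGaussian

lemma hasSubgaussianMGF_of_hasLaw_gaussianReal {Ω : Type*} [MeasurableSpace Ω]
    {μ : Measure Ω} {Y : Ω → ℝ} {v : NNReal} (hY : HasLaw Y (gaussianReal 0 v) μ) :
    HasSubgaussianMGF Y v μ where
  integrable_exp_mul r := by
    have hexp := integrable_exp_mul_gaussianReal (μ := 0) (v := v) r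
    rw [← hY.map_eq] at hexp
    exact hexp.comp_aemeasurable hY.aemeasurable
  mgf_le r := by rw [mgf_gaussianReal hY.map_eq, zero_mul, zero_add]

variable {Ω ι : Type*} [MeasurableSpace Ω] {μ : Measure Ω} {Z : ι → Ω → ℝ} {c : NNReal}

lemma integrable_exp_mul_iSup [Finite ι] [Nonempty ι] (hZ : ∀ i, HasSubgaussianMGF (Z i) c μ)
    (r : ℝ) : Integrable (fun ω => exp (r * ⨆ i, Z i ω)) μ :=
  integrable_comp_iSup (f := fun x => exp (r * x)) (by fun_prop)
    (fun i => (hZ i).aemeasurable) fun i => (hZ i).integrable_exp_mul r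

variable [Fintype ι] [Nonempty ι]

lemma mgf_iSup_le_of_hasSubgaussianMGF (hZ : ∀ i, HasSubgaussianMGF (Z i) c μ) (r : ℝ) :
    mgf (fun ω => ⨆ i, Z i ω) μ r ≤ Fintype.card ι * exp (c * r ^ 2 / 2) := by
  have hexp (i : ι) : Integrable (fun ω => exp (r * Z i ω)) μ := (hZ i).integrable_exp_mul r
  calc ∫ ω, exp (r * ⨆ i, Z i ω) ∂μ
      ≤ ∫ ω, ∑ i, exp (r * Z i ω) ∂μ :=
        integral_mono (integrable_exp_mul_iSup hZ r) (integrable_finsetSum _ fun i _ => hexp i)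
          fun ω => apply_iSup_le_sum (f := fun x => exp (r * x)) (fun x => (exp_pos _).le)
            fun i => Z i ω
    _ = ∑ i, mgf (Z i) μ r := integral_finsetSum _ fun i _ => hexp i
    _ ≤ ∑ _i : ι, exp (c * r ^ 2 / 2) := Finset.sum_le_sum fun i _ => (hZ i).mgf_le r
    _ = Fintype.card ι * exp (c * r ^ 2 / 2) := by
        rw [Finset.sum_const, Finset.card_univ, nsmul_eq_mul]

variable [IsProbabilityMeasure μ]

lemma exp_mul_integral_le_mgf {Y : Ω → ℝ} {r : ℝ} (hY : Integrable Y μ)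
    (hexp : Integrable (fun ω => exp (r * Y ω)) μ) : exp (r * ∫ ω, Y ω ∂μ) ≤ mgf Y μ r := by
  rw [← integral_const_mul]
  exact convexOn_exp.map_integral_le continuous_exp.continuousOn isClosed_univ
    (ae_of_all μ fun _ => mem_univ _) (hY.const_mul r) hexp

lemma mul_integral_iSup_le_of_hasSubgaussianMGF (hZ : ∀ i, HasSubgaussianMGF (Z i) c μ) (r : ℝ) :
    r * ∫ ω, (⨆ i, Z i ω) ∂μ ≤ log (Fintype.card ι) + c * r ^ 2 / 2 := by
  have hcard : (0 : ℝ) < Fintype.card ι := mod_cast Fintype.card_pos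
  rw [← exp_le_exp, exp_add, exp_log hcard]
  exact (exp_mul_integral_le_mgf (integrable_iSup fun i => (hZ i).integrable)
    (integrable_exp_mul_iSup hZ r)).trans (mgf_iSup_le_of_hasSubgaussianMGF hZ r)

lemma integral_iSup_le_sqrt_of_hasSubgaussianMGF (hZ : ∀ i, HasSubgaussianMGF (Z i) c μ) :
    ∫ ω, (⨆ i, Z i ω) ∂μ ≤ √(c * (2 * log (Fintype.card ι))) := by
  set M := ∫ ω, (⨆ i, Z i ω) ∂μ
  have hdiscrim : discrim (c / 2 : ℝ) (-M) (log (Fintype.card ι)) ≤ 0 :=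
    discrim_le_zero fun r => by linarith [mul_integral_iSup_le_of_hasSubgaussianMGF hZ r]
  refine le_sqrt_of_sq_le ?_
  rw [discrim] at hdiscrim
  linarith

end SubGaussian

section L2Norm

variable {Ω : Type} [MeasurableSpace Ω]

lemma l2norm_nonneg (μ : Measure Ω) (Y : Ω → ℝ) : 0 ≤ l2norm μ Y :=
  Real.sqrt_nonneg _

lemma l2norm_eq_sqrt_of_hasLaw_gaussianReal {μ : Measure Ω} {Y : Ω → ℝ} {v : NNReal}
    (hY : HasLaw Y (gaussianReal 0 v) μ) : l2norm μ Y = √v := by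
  have hmean : ∫ ω, Y ω ∂μ = 0 := hY.integral_eq.trans integral_id_gaussianReal
  rw [l2norm, ← variance_of_integral_eq_zero hY.aemeasurable hmean, hY.variance_eq,
    variance_id_gaussianReal]

end L2Norm

namespace IsCenteredGaussianOn

variable {Ω : Type} [MeasurableSpace Ω] {μ : Measure Ω} {X : ℝ → Ω → ℝ} {S : Set ℝ} {s t : ℝ}

lemma exists_hasLaw (hX : IsCenteredGaussianOn μ X S) (ht : t ∈ S) :
    ∃ v, HasLaw (X t) (gaussianReal 0 v) μ := by
  obtain ⟨v, hv⟩ := hX.2 1 (fun _ => 1) (fun _ => t) fun _ => ht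
  exact ⟨v, (hX.1 t ht).aemeasurable, by simpa using hv⟩

lemma exists_hasLaw_sub (hX : IsCenteredGaussianOn μ X S) (hs : s ∈ S) (ht : t ∈ S) :
    ∃ v, HasLaw (fun ω => X t ω - X s ω) (gaussianReal 0 v) μ := by
  obtain ⟨v, hv⟩ := hX.2 2 ![1, -1] ![t, s] (Fin.forall_fin_two.2 ⟨ht, hs⟩)
  exact ⟨v, ((hX.1 t ht).sub (hX.1 s hs)).aemeasurable,
    by simpa [Fin.sum_univ_two, ← sub_eq_add_neg] using hv⟩

lemma integrable (hX : IsCenteredGaussianOn μ X S) (ht : t ∈ S) : Integrable (X t) μ :=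
  let ⟨_, hv⟩ := hX.exists_hasLaw ht
  (hasSubgaussianMGF_of_hasLaw_gaussianReal hv).integrable

lemma integral_eq_zero (hX : IsCenteredGaussianOn μ X S) (ht : t ∈ S) : ∫ ω, X t ω ∂μ = 0 :=
  let ⟨_, hv⟩ := hX.exists_hasLaw ht
  hv.integral_eq.trans integral_id_gaussianReal

lemma hasSubgaussianMGF_sub (hX : IsCenteredGaussianOn μ X S) (hs : s ∈ S) (ht : t ∈ S)
    {C : NNReal} (hC : l2norm μ (fun ω => X t ω - X s ω) ≤ C) :
    HasSubgaussianMGF (fun ω => X t ω - X s ω) (C ^ 2) μ := by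
  obtain ⟨v, hv⟩ := hX.exists_hasLaw_sub hs ht
  have hvC : (v : ℝ) ≤ C ^ 2 := by
    rwa [l2norm_eq_sqrt_of_hasLaw_gaussianReal hv, Real.sqrt_le_left C.coe_nonneg] at hC
  have hsub := hasSubgaussianMGF_of_hasLaw_gaussianReal hv
  refine ⟨hsub.integrable_exp_mul, fun r => (hsub.mgf_le r).trans ?_⟩
  push_cast
  gcongr

variable {ι : Type*} [Nonempty ι] {τ : ι → ℝ}

lemma integral_iSup_nonneg [Finite ι] (hX : IsCenteredGaussianOn μ X S) (hτ : ∀ i, τ i ∈ S) :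
    0 ≤ ∫ ω, (⨆ i, X (τ i) ω) ∂μ := by
  obtain ⟨i⟩ := ‹Nonempty ι›
  rw [← hX.integral_eq_zero (hτ i)]
  exact integral_mono (hX.integrable (hτ i)) (integrable_iSup fun j => hX.integrable (hτ j))
    fun ω => le_ciSup (finite_range fun j => X (τ j) ω).bddAbove i

lemma integral_iSup_sub [Finite ι] (hX : IsCenteredGaussianOn μ X S) (hs : s ∈ S)
    (hτ : ∀ i, τ i ∈ S) :
    ∫ ω, (⨆ i, (X (τ i) ω - X s ω)) ∂μ = ∫ ω, (⨆ i, X (τ i) ω) ∂μ :=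
  calc ∫ ω, (⨆ i, (X (τ i) ω - X s ω)) ∂μ
      = ∫ ω, ((⨆ i, X (τ i) ω) - X s ω) ∂μ := by
        simp only [ciSup_sub (finite_range _).bddAbove]
    _ = ∫ ω, (⨆ i, X (τ i) ω) ∂μ := by
        rw [integral_sub (integrable_iSup fun i => hX.integrable (hτ i)) (hX.integrable hs),
          hX.integral_eq_zero hs, sub_zero]

variable [IsProbabilityMeasure μ] {C : ℝ}

lemma integral_iSup_le [Fintype ι] (hX : IsCenteredGaussianOn μ X S) (hs : s ∈ S)
    (hτ : ∀ i, τ i ∈ S) (hC : ∀ i, l2norm μ (fun ω => X (τ i) ω - X s ω) ≤ C) :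
    ∫ ω, (⨆ i, X (τ i) ω) ∂μ ≤ C * √(2 * log (Fintype.card ι)) := by
  have hC₀ : 0 ≤ C := (l2norm_nonneg μ _).trans (hC (Classical.arbitrary ι))
  lift C to NNReal using hC₀
  calc ∫ ω, (⨆ i, X (τ i) ω) ∂μ
      = ∫ ω, (⨆ i, (X (τ i) ω - X s ω)) ∂μ := (hX.integral_iSup_sub hs hτ).symm
    _ ≤ √((C ^ 2 : NNReal) * (2 * log (Fintype.card ι))) :=
        integral_iSup_le_sqrt_of_hasSubgaussianMGF fun i =>
          hX.hasSubgaussianMGF_sub hs (hτ i) (hC i)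
    _ = C * √(2 * log (Fintype.card ι)) := by
        rw [NNReal.coe_pow, Real.sqrt_mul (by positivity), Real.sqrt_sq C.coe_nonneg]

end IsCenteredGaussianOn

section Grid

lemma natCast_div_mem_Icc {i n : ℕ} (h : i ≤ n) : (i / n : ℝ) ∈ Icc (0 : ℝ) 1 :=
  unitInterval.div_mem i.cast_nonneg n.cast_nonneg (mod_cast h)

variable {Ω : Type} [MeasurableSpace Ω] {μ : Measure Ω} {X : ℝ → Ω → ℝ}

lemma expMaxGrid_nonneg (hX : IsCenteredGaussianOn μ X (Icc 0 1)) (n : ℕ) :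
    0 ≤ expMaxGrid μ X n :=
  hX.integral_iSup_nonneg fun i : Fin (n + 1) => natCast_div_mem_Icc i.is_le

lemma expMaxGrid_le [IsProbabilityMeasure μ] (hX : IsCenteredGaussianOn μ X (Icc 0 1)) {C : ℝ}
    (hC : ∀ t ∈ Icc (0 : ℝ) 1, l2norm μ (fun ω => X t ω - X 0 ω) ≤ C) (n : ℕ) :
    expMaxGrid μ X n ≤ C * √(2 * log (n + 1)) := by
  have hgrid (i : Fin (n + 1)) : (i / n : ℝ) ∈ Icc (0 : ℝ) 1 := natCast_div_mem_Icc i.is_le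
  simpa [expMaxGrid] using hX.integral_iSup_le unitInterval.zero_mem hgrid fun i => hC _ (hgrid i)

end Grid

section Asymptotics

lemma log_natCast_add_one_le {n : ℕ} (hn : n ≠ 0) : log (n + 1) ≤ log 2 + log n := by
  have hn₁ : (1 : ℝ) ≤ n := mod_cast Nat.one_le_iff_ne_zero.2 hn
  rw [← log_mul two_ne_zero (by positivity)]
  exact log_le_log (by positivity) (by linarith)

lemma tendsto_mul_log_natCast_add_one {α : Type*} {l : Filter α} {a : α → ℝ} {n : α → ℕ}
    (ha : ∀ m, 0 ≤ a m) (hn : ∀ m, n m ≠ 0) (halim : Tendsto a l (𝓝 0))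
    (han : Tendsto (fun m => a m * log (n m)) l (𝓝 0)) :
    Tendsto (fun m => a m * log (n m + 1)) l (𝓝 0) := by
  have hupper : Tendsto (fun m => a m * log 2 + a m * log (n m)) l (𝓝 0) := by
    simpa using (halim.mul_const (log 2)).add han
  refine squeeze_zero (fun m => ?_) (fun m => ?_) hupper
  · exact mul_nonneg (ha m) (log_nonneg (by linarith [(n m).cast_nonneg (α := ℝ)]))
  · rw [← mul_add]
    exact mul_le_mul_of_nonneg_left (log_natCast_add_one_le (hn m)) (ha m)

lemma abs_sub_rpow_le_one {s t H : ℝ} (hs : s ∈ Icc (0 : ℝ) 1) (ht : t ∈ Icc (0 : ℝ) 1)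
    (hH : 0 ≤ H) : |t - s| ^ H ≤ 1 :=
  rpow_le_one (abs_nonneg _) (Real.dist_le_of_mem_Icc_01 ht hs) hH

end Asymptotics

theorem stmt19_general {α : Type*} {l : Filter α} {Ω : α → Type} [∀ m, MeasurableSpace (Ω m)]
    (μ : ∀ m, Measure (Ω m)) [∀ m, IsProbabilityMeasure (μ m)] (X : ∀ m, ℝ → Ω m → ℝ) (C : ℝ)
    (hgauss : ∀ m, IsCenteredGaussianOn (μ m) (X m) (Icc 0 1))
    (hC : ∀ m, ∀ t ∈ Icc (0 : ℝ) 1, l2norm (μ m) (fun ω => X m t ω - X m 0 ω) ≤ C)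
    (a : α → ℝ) (ha : ∀ m, 0 ≤ a m) (halim : Tendsto a l (𝓝 0))
    (n : α → ℕ) (hn : ∀ m, n m ≠ 0) (han : Tendsto (fun m => a m * log (n m)) l (𝓝 0)) :
    Tendsto (fun m => √(a m) * expMaxGrid (μ m) (X m) (n m)) l (𝓝 0) := by
  have hbound : Tendsto (fun m => C * √(2 * (a m * log (n m + 1)))) l (𝓝 0) := by
    simpa using
      ((tendsto_mul_log_natCast_add_one ha hn halim han).const_mul 2).sqrt.const_mul C
  refine squeeze_zero (fun m => mul_nonneg (Real.sqrt_nonneg _) (expMaxGrid_nonneg (hgauss m) _))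
    (fun m => ?_) hbound
  calc √(a m) * expMaxGrid (μ m) (X m) (n m)
      ≤ √(a m) * (C * √(2 * log (n m + 1))) := by
        gcongr
        exact expMaxGrid_le (hgauss m) (hC m) (n m)
    _ = C * √(2 * (a m * log (n m + 1))) := by
        rw [mul_left_comm 2, Real.sqrt_mul (ha m)]
        ring

/-- if `H_m → 0` and `H_m ln n_m → 0`, then
`E[max_{0≤i≤n_m} X^{H_m}_{i/n_m}] = o(H_m^{-1/2})`. -/
theorem stmt19 {Ω : Type} [MeasurableSpace Ω] (μ : Measure Ω) [IsProbabilityMeasure μ]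
    (X : ℝ → ℝ → Ω → ℝ) (C₂ : ℝ) (hC₂ : 0 < C₂)
    (hgauss : ∀ H ∈ Ioo (0:ℝ) 1, IsCenteredGaussianOn μ (X H) (Icc 0 1))
    (hupp : ∀ H ∈ Ioo (0:ℝ) 1, ∀ s ∈ Icc (0:ℝ) 1, ∀ t ∈ Icc (0:ℝ) 1,
      l2norm μ (fun ω => X H t ω - X H s ω) ≤ C₂ * |t - s| ^ H)
    (H : ℕ → ℝ) (hH : ∀ m, H m ∈ Ioo (0:ℝ) 1) (hHlim : Tendsto H atTop (𝓝 0))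
    (n : ℕ → ℕ) (hn : ∀ m, 2 ≤ n m)
    (hHn : Tendsto (fun m => H m * Real.log (n m)) atTop (𝓝 0)) :
    Tendsto (fun m => Real.sqrt (H m) * expMaxGrid μ (X (H m)) (n m)) atTop (𝓝 0) := by
  have hincr (m : ℕ) (t : ℝ) (ht : t ∈ Icc 0 1) :
      l2norm μ (fun ω => X (H m) t ω - X (H m) 0 ω) ≤ C₂ :=
    (hupp _ (hH m) 0 unitInterval.zero_mem t ht).trans <|
      mul_le_of_le_one_right hC₂.le (abs_sub_rpow_le_one unitInterval.zero_mem ht (hH m).1.le)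
  exact stmt19_general (fun _ => μ) (fun m => X (H m)) C₂ (fun m => hgauss _ (hH m)) hincr
    H (fun m => (hH m).1.le) hHlim n (fun m => (two_pos.trans_le (hn m)).ne') hHn
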